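/- arXiv:2109.15041 — 2 statements merged into one kernel-verified Lean document; each statement's English description precedes it below -/
import Mathlib

section
/- Fix R > R''. There exists T₀* depending only on R and R'' such that for every T₀ ≥ T₀*, every τ > 0, every δ ∈ (0,1/2), and every continuously differentiable compactly supported real-valued ψ on Ω_{T₀,R''} with supp ψ ⊂ {r − t < R}: ‖r^{−1}ψ‖ ≤ (2/(5τ))‖P₂ψ‖. -/
noncomputable section
open MeasureTheory Real Set Filter Topology

namespace UCP

/-- Spacetime `ℝ^{1+3}`: a point is `(t, x)` with `x ∈ ℝ³`. -/
abbrev Spc : Type := ℝ × EuclideanSpace ℝ (Fin 3)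

/-- Coordinate directions `e_α`, `α = 0,1,2,3` (`e_0` is the time direction). -/
def eVec (α : Fin 4) : Spc :=
  Fin.cases ((1 : ℝ), (0 : EuclideanSpace ℝ (Fin 3)))
    (fun i => ((0 : ℝ), EuclideanSpace.single i (1 : ℝ))) α

/-- The partial derivative `∂_α u`. -/
def pd (α : Fin 4) (u : Spc → ℝ) (p : Spc) : ℝ := fderiv ℝ u p (eVec α)

/-- `∂_t u`. -/
def dt (u : Spc → ℝ) : Spc → ℝ := pd 0 u

/-- `∂_i u`, `i = 1,2,3`. -/
def dxi (i : Fin 3) (u : Spc → ℝ) : Spc → ℝ := pd i.succ u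

/-- The d'Alembertian `□u = -∂_t² u + Δ_x u`. -/
def box (u : Spc → ℝ) (p : Spc) : ℝ :=
  - dt (dt u) p + ∑ i : Fin 3, dxi i (dxi i u) p

/-- Signs of the Minkowski metric `diag(-1,1,1,1)`, so that `∂^α = eta α • ∂_α`. -/
def eta (α : Fin 4) : ℝ := if α = 0 then -1 else 1

/-- `r = |x|`. -/
def rr (p : Spc) : ℝ := ‖p.2‖

/-- The radial derivative `∂_r u = Σ_i (x_i/r) ∂_i u`. -/
def dr (u : Spc → ℝ) (p : Spc) : ℝ := ∑ i : Fin 3, (p.2 i / rr p) * dxi i u p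

/-- `ω̂ = (-1, x/r)` as a `Fin 4`-indexed family. -/
def hatom (p : Spc) (α : Fin 4) : ℝ := Fin.cases (-1 : ℝ) (fun i => p.2 i / rr p) α

/-- The region `Ω_{T₀,R''} = {t ≥ T₀, r - t > R''}`. -/
def Om (T₀ R'' : ℝ) : Set Spc := {p | T₀ ≤ p.1 ∧ R'' < rr p - p.1}

/-- The open region `{t > T₀, r - t > R''}`. -/
def OmO (T₀ R'' : ℝ) : Set Spc := {p | T₀ < p.1 ∧ R'' < rr p - p.1}

/-- The weight `f_δ(t,x) = r - t - δ⁻¹ t^{-δ}`. -/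
def fdel (δ : ℝ) (p : Spc) : ℝ := rr p - p.1 - δ⁻¹ * p.1 ^ (-δ)

/-- `P₁ψ = □ψ + τ² (∂^α f ∂_α f) ψ`. -/
def P1 (τ δ : ℝ) (ψ : Spc → ℝ) (p : Spc) : ℝ :=
  box ψ p + τ ^ 2 * (∑ α : Fin 4, eta α * pd α (fdel δ) p * pd α (fdel δ) p) * ψ p

/-- `P₂ψ = -2τ ∂^α f ∂_α ψ`. -/
def P2 (τ δ : ℝ) (ψ : Spc → ℝ) (p : Spc) : ℝ :=
  -2 * τ * ∑ α : Fin 4, eta α * pd α (fdel δ) p * pd α ψ p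

/-- The weighted inner product `⟨F,G⟩ = ∫_{Ω_{T₀,R''}} F G t² dx dt`. -/
def ip (T₀ R'' : ℝ) (F G : Spc → ℝ) : ℝ := ∫ p in Om T₀ R'', F p * G p * p.1 ^ 2

/-- The weighted norm `‖F‖ = ⟨F,F⟩^{1/2}`. -/
def nrm (T₀ R'' : ℝ) (F : Spc → ℝ) : ℝ := Real.sqrt (ip T₀ R'' F F)

/-!
Integrating by parts against the vector field `t² r⁻¹ ∂^α f_δ` gives
`⟨r⁻¹ψ, P₂ψ⟩ = τ ∫ ψ² ∂_α(t² r⁻¹ ∂^α f_δ)`, and the divergence on the right equals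
`(2t - (1 - δ) t^{-δ}) r⁻¹ + t² r⁻²`. As soon as `t ≥ 4` and `r ≥ 7t/8` this is at least
`(5/2) t² r⁻²`, so that `(5τ/2) ‖r⁻¹ψ‖² ≤ ⟨r⁻¹ψ, P₂ψ⟩`, and Cauchy–Schwarz concludes.
-/

section Divergence

variable {E F : Type*} [NormedAddCommGroup E] [NormedSpace ℝ E] [NormedAddCommGroup F]
  [NormedSpace ℝ F]

/-- The divergence `tr X'` of a vector field `X`, in a basis-free form. -/
def divergence (X : E → E) (p : E) : ℝ := LinearMap.trace ℝ E (fderiv ℝ X p)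

lemma divergence_eq_sum {ι : Type*} [Fintype ι] (b : Module.Basis ι ℝ E) (X : E → E) (p : E) :
    divergence X p = ∑ i, b.repr (fderiv ℝ X p (b i)) i := by
  classical
  simp only [divergence, LinearMap.trace_eq_matrix_trace ℝ b, Matrix.trace, Matrix.diag_apply,
    LinearMap.toMatrix_apply, ContinuousLinearMap.coe_coe]

lemma divergence_eq_sum_fderiv_coord [FiniteDimensional ℝ E] {ι : Type*} [Fintype ι]
    (b : Module.Basis ι ℝ E) {X : E → E} (hX : Differentiable ℝ X) :
    divergence X =
      fun p => ∑ i, fderiv ℝ ((b.coord i).toContinuousLinearMap ∘ X) p (b i) := by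
  ext p
  rw [divergence_eq_sum b]
  refine Finset.sum_congr rfl fun i _ => ?_
  rw [((b.coord i).toContinuousLinearMap.hasFDerivAt.comp p (hX p).hasFDerivAt).fderiv]
  rfl

lemma divergence_id [FiniteDimensional ℝ E] (p : E) :
    divergence (fun x : E => x) p = Module.finrank ℝ E := by
  simp [divergence]

lemma divergence_eq_deriv (a : ℝ → ℝ) (t : ℝ) : divergence a t = deriv a t := by
  simp [divergence_eq_sum (Module.Basis.singleton Unit ℝ)]

lemma divergence_prodMap [FiniteDimensional ℝ E] [FiniteDimensional ℝ F] {X : E → E} {Y : F → F}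
    {p : E × F} (hX : DifferentiableAt ℝ X p.1) (hY : DifferentiableAt ℝ Y p.2) :
    divergence (Prod.map X Y) p = divergence X p.1 + divergence Y p.2 := by
  rw [divergence, (hX.hasFDerivAt.prodMap p hY.hasFDerivAt).fderiv]
  exact LinearMap.trace_prodMap' _ _

lemma divergence_smul [FiniteDimensional ℝ E] {u : E → ℝ} {X : E → E} {p : E}
    (hu : DifferentiableAt ℝ u p) (hX : p ∈ tsupport u → DifferentiableAt ℝ X p) :
    divergence (fun q => u q • X q) p = u p * divergence X p + fderiv ℝ u p (X p) := by
  by_cases hp : p ∈ tsupport u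
  · simp [divergence, fderiv_fun_smul hu (hX hp)]
  · have hu0 : u =ᶠ[𝓝 p] 0 := notMem_tsupport_iff_eventuallyEq.1 hp
    have huX : (fun q => u q • X q) =ᶠ[𝓝 p] 0 := hu0.mono fun q hq => by simp [hq]
    simp [divergence, huX.fderiv_eq, hu0.fderiv_eq, hu0.eq_of_nhds]

lemma mul_divergence_eq_sub [FiniteDimensional ℝ E] {u : E → ℝ} {X : E → E} {p : E}
    (hu : DifferentiableAt ℝ u p) (hX : p ∈ tsupport u → DifferentiableAt ℝ X p) :
    u p * divergence X p = divergence (fun q => u q • X q) p - fderiv ℝ u p (X p) := by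
  rw [divergence_smul hu hX, add_sub_cancel_right]

lemma contDiff_smul_of_tsupport {n : ℕ∞} {u : E → ℝ} {X : E → F} (hu : ContDiff ℝ n u)
    (hX : ∀ p ∈ tsupport u, ContDiffAt ℝ n X p) : ContDiff ℝ n fun p => u p • X p :=
  contMDiff_iff_contDiff.1 <| contMDiff_of_tsupport fun p hp =>
    (hu.contDiffAt.smul (hX p (tsupport_smul_subset_left u X hp))).contMDiffAt

lemma continuous_fderiv_apply_of_tsupport {u : E → ℝ} {X : E → E} (hu : ContDiff ℝ 1 u)
    (hX : ∀ p ∈ tsupport u, ContinuousAt X p) : Continuous fun p => fderiv ℝ u p (X p) := by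
  have hsupp : tsupport (fun p => fderiv ℝ u p (X p)) ⊆ tsupport u :=
    closure_minimal (fun p hp => support_fderiv_subset ℝ fun h => hp (by simp [h]))
      (isClosed_tsupport u)
  exact continuous_of_tsupport fun p hp =>
    (hu.continuous_fderiv one_ne_zero).continuousAt.clm_apply (hX p (hsupp hp))

lemma hasCompactSupport_fderiv_apply {u : E → ℝ} (hu : HasCompactSupport u) (X : E → E) :
    HasCompactSupport fun p => fderiv ℝ u p (X p) :=
  (hu.fderiv ℝ).mono' fun p hp => subset_tsupport _ fun h => hp (by simp [h])

variable [MeasurableSpace E] [BorelSpace E] {μ : Measure E}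

lemma integrable_fderiv_apply [IsFiniteMeasureOnCompacts μ] {u : E → ℝ} {X : E → E}
    (hu : ContDiff ℝ 1 u) (hc : HasCompactSupport u) (hX : ∀ p ∈ tsupport u, ContinuousAt X p) :
    Integrable (fun p => fderiv ℝ u p (X p)) μ :=
  (continuous_fderiv_apply_of_tsupport hu hX).integrable_of_hasCompactSupport
    (hasCompactSupport_fderiv_apply hc X)

variable [FiniteDimensional ℝ E]

lemma integrable_divergence [IsFiniteMeasureOnCompacts μ] {X : E → E} (hX : ContDiff ℝ 1 X)
    (hc : HasCompactSupport X) : Integrable (divergence X) μ := by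
  let b := Module.finBasis ℝ E
  rw [divergence_eq_sum_fderiv_coord b (hX.differentiable one_ne_zero)]
  exact integrable_finsetSum _ fun i _ => integrable_fderiv_apply
    ((b.coord i).toContinuousLinearMap.contDiff.comp hX) (hc.comp_left (map_zero _))
    fun _ _ => continuousAt_const

lemma integrable_mul_divergence [IsFiniteMeasureOnCompacts μ] {u : E → ℝ} {X : E → E}
    (hu : ContDiff ℝ 1 u) (hc : HasCompactSupport u)
    (hX : ∀ p ∈ tsupport u, ContDiffAt ℝ 1 X p) :
    Integrable (fun p => u p * divergence X p) μ := by
  simp only [mul_divergence_eq_sub (hu.differentiable one_ne_zero _)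
    fun hp => (hX _ hp).differentiableAt one_ne_zero]
  exact (integrable_divergence (contDiff_smul_of_tsupport (n := 1) hu hX) hc.smul_right).sub
    (integrable_fderiv_apply hu hc fun p hp => (hX p hp).continuousAt)

variable [μ.IsAddHaarMeasure]

lemma integral_fderiv_apply_const_eq_zero {u : E → ℝ} (hu : ContDiff ℝ 1 u)
    (hc : HasCompactSupport u) (v : E) : ∫ p, fderiv ℝ u p v ∂μ = 0 := by
  have hint : Integrable (fun p => fderiv ℝ u p v) μ :=
    integrable_fderiv_apply hu hc fun _ _ => continuousAt_const
  simpa using integral_mul_fderiv_eq_neg_fderiv_mul_of_integrable (f := fun _ : E => (1 : ℝ))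
    (μ := μ) (g := u) (v := v) (by simp) (by simpa using hint)
    (by simpa using hu.continuous.integrable_of_hasCompactSupport hc) (by fun_prop)
    (fun p _ => hu.differentiable one_ne_zero p)

lemma integral_divergence_eq_zero {X : E → E} (hX : ContDiff ℝ 1 X) (hc : HasCompactSupport X) :
    ∫ p, divergence X p ∂μ = 0 := by
  let b := Module.finBasis ℝ E
  have hbX (i) : ContDiff ℝ 1 ((b.coord i).toContinuousLinearMap ∘ X) :=
    (b.coord i).toContinuousLinearMap.contDiff.comp hX
  have hbc (i) : HasCompactSupport ((b.coord i).toContinuousLinearMap ∘ X) :=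
    hc.comp_left (map_zero _)
  rw [divergence_eq_sum_fderiv_coord b (hX.differentiable one_ne_zero), integral_finsetSum _
    fun i _ => integrable_fderiv_apply (hbX i) (hbc i) fun _ _ => continuousAt_const]
  exact Finset.sum_eq_zero fun i _ => integral_fderiv_apply_const_eq_zero (hbX i) (hbc i) (b i)

lemma integral_mul_divergence_eq_neg {u : E → ℝ} {X : E → E} (hu : ContDiff ℝ 1 u)
    (hc : HasCompactSupport u) (hX : ∀ p ∈ tsupport u, ContDiffAt ℝ 1 X p) :
    ∫ p, u p * divergence X p ∂μ = -∫ p, fderiv ℝ u p (X p) ∂μ := by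
  have huX : ContDiff ℝ 1 fun p => u p • X p := contDiff_smul_of_tsupport (n := 1) hu hX
  have huXc : HasCompactSupport fun p => u p • X p := hc.smul_right
  simp only [mul_divergence_eq_sub (hu.differentiable one_ne_zero _)
    fun hp => (hX _ hp).differentiableAt one_ne_zero]
  rw [integral_sub (integrable_divergence huX huXc)
    (integrable_fderiv_apply hu hc fun p hp => (hX p hp).continuousAt),
    integral_divergence_eq_zero huX huXc, zero_sub]

end Divergence

section Norm

variable {E : Type*} [NormedAddCommGroup E] [InnerProductSpace ℝ E] {x : E}

lemma hasFDerivAt_norm (hx : x ≠ 0) : HasFDerivAt norm (‖x‖⁻¹ • innerSL ℝ x) x := by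
  have h := (hasStrictFDerivAt_norm_sq x).hasFDerivAt.sqrt (pow_ne_zero 2 (norm_ne_zero_iff.2 hx))
  simp only [Real.sqrt_sq (norm_nonneg _)] at h
  refine h.congr_fderiv ?_
  ext y
  simp only [one_div, mul_inv_rev, smul_apply, coe_innerSL_apply, nsmul_eq_mul,
    Nat.cast_ofNat, smul_eq_mul]
  ring

lemma divergence_inv_norm_smul [FiniteDimensional ℝ E] (hx : x ≠ 0) :
    divergence (fun y : E => ‖y‖⁻¹ • y) x = (Module.finrank ℝ E - 1) * ‖x‖⁻¹ := by
  have hx' : ‖x‖ ≠ 0 := norm_ne_zero_iff.2 hx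
  have hinv : HasFDerivAt (fun y : E => ‖y‖⁻¹) (-(‖x‖ ^ 2)⁻¹ • ‖x‖⁻¹ • innerSL ℝ x) x :=
    (hasDerivAt_inv hx').comp_hasFDerivAt x (hasFDerivAt_norm hx)
  rw [divergence_smul hinv.differentiableAt fun _ => differentiableAt_fun_id, divergence_id,
    hinv.fderiv]
  simp only [neg_smul, neg_apply, smul_apply, coe_innerSL_apply, inner_self_eq_norm_sq_to_K,
    ringHom_apply, smul_eq_mul]
  field_simp
  ring

end Norm

lemma sqrt_integral_mul_self_le {α : Type*} [MeasurableSpace α] {μ : Measure α}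
    {f g : α → ℝ} {c : ℝ} (hc : 0 < c) (hf : MemLp f 2 μ) (hg : MemLp g 2 μ)
    (h : c * ∫ x, f x * f x ∂μ ≤ ∫ x, f x * g x ∂μ) :
    √(∫ x, f x * f x ∂μ) ≤ c⁻¹ * √(∫ x, g x * g x ∂μ) := by
  have hff : Integrable (fun x => f x * f x) μ := hf.integrable_mul hf
  have hfg : Integrable (fun x => f x * g x) μ := hf.integrable_mul hg
  have hgg : Integrable (fun x => g x * g x) μ := hg.integrable_mul hg
  have hyoung : 2 * c * ∫ x, f x * g x ∂μ ≤ c ^ 2 * ∫ x, f x * f x ∂μ + ∫ x, g x * g x ∂μ := by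
    rw [← integral_const_mul, ← integral_const_mul, ← integral_add (hff.const_mul _) hgg]
    exact integral_mono (hfg.const_mul _) ((hff.const_mul _).add hgg) fun x => by
      linarith [sq_nonneg (c * f x - g x)]
  have hle : c ^ 2 * ∫ x, f x * f x ∂μ ≤ ∫ x, g x * g x ∂μ := by
    linarith [mul_le_mul_of_nonneg_left h hc.le]
  rw [← div_eq_inv_mul, le_div_iff₀' hc]
  calc c * √(∫ x, f x * f x ∂μ) = √(c ^ 2 * ∫ x, f x * f x ∂μ) := by
        rw [Real.sqrt_mul (sq_nonneg c), Real.sqrt_sq hc.le]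
    _ ≤ √(∫ x, g x * g x ∂μ) := Real.sqrt_le_sqrt hle

lemma tsupport_sq_subset {α : Type*} [TopologicalSpace α] {f : α → ℝ} :
    tsupport (fun x => f x ^ 2) ⊆ tsupport f :=
  closure_mono fun x hx => by simpa using hx

instance : (volume : Measure Spc).IsAddHaarMeasure := Measure.prod.instIsAddHaarMeasure _ _

lemma mk_eq_sum_smul_eVec (a : ℝ) (y : EuclideanSpace ℝ (Fin 3)) :
    (a, y) = a • eVec 0 + ∑ i : Fin 3, y i • eVec i.succ := by
  ext i
  · simp [eVec, Prod.fst_sum]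
  · fin_cases i <;> simp [eVec, Fin.sum_univ_three]

/-- The vector field `∂^α f_δ`; see `P2_eq`. -/
def fdelGrad (δ : ℝ) : Spc → Spc := Prod.map (fun t => 1 - t ^ (-1 - δ)) fun x => ‖x‖⁻¹ • x

/-- The multiplier `t² r⁻¹ ∂^α f_δ` against which `P2` is integrated by parts; `t²` is the density
of the weighted inner product `ip`. -/
def multiplierField (δ : ℝ) (p : Spc) : Spc := (p.1 ^ 2 * (rr p)⁻¹) • fdelGrad δ p

section Field

variable {δ : ℝ} {p : Spc}

lemma hasFDerivAt_rr (hr : rr p ≠ 0) :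
    HasFDerivAt rr ((‖p.2‖⁻¹ • innerSL ℝ p.2) ∘L ContinuousLinearMap.snd ℝ ℝ _) p :=
  (hasFDerivAt_norm (norm_ne_zero_iff.1 hr)).comp p hasFDerivAt_snd

lemma contDiffAt_inv_rr (hr : rr p ≠ 0) : ContDiffAt ℝ 1 (fun q => (rr q)⁻¹) p :=
  (contDiffAt_snd.norm ℝ (norm_ne_zero_iff.1 hr)).inv hr

lemma hasFDerivAt_fdel (hδ : δ ≠ 0) (ht : p.1 ≠ 0) (hr : rr p ≠ 0) :
    HasFDerivAt (fdel δ)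
      ((‖p.2‖⁻¹ • innerSL ℝ p.2) ∘L ContinuousLinearMap.snd ℝ ℝ _ -
        (1 - p.1 ^ (-1 - δ)) • ContinuousLinearMap.fst ℝ ℝ _) p := by
  have hpow : HasFDerivAt (fun q : Spc => q.1 ^ (-δ))
      ((-δ * p.1 ^ (-δ - 1)) • ContinuousLinearMap.fst ℝ ℝ _) p :=
    hasFDerivAt_fst.rpow_const (Or.inl ht)
  refine (((hasFDerivAt_rr hr).sub hasFDerivAt_fst).sub (hpow.const_mul δ⁻¹)).congr_fderiv ?_
  ext
  · simp only [ContinuousLinearMap.comp_apply, ContinuousLinearMap.inl_apply, sub_apply,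
      smul_apply, ContinuousLinearMap.coe_fst', ContinuousLinearMap.coe_snd', map_zero,
      smul_eq_mul]
    field_simp
    ring_nf
  · simp

lemma P2_eq {τ : ℝ} {ψ : Spc → ℝ} (hδ : δ ≠ 0) (ht : p.1 ≠ 0) (hr : rr p ≠ 0) :
    P2 τ δ ψ p = -2 * τ * fderiv ℝ ψ p (fdelGrad δ p) := by
  have h0 : pd 0 (fdel δ) p = -(1 - p.1 ^ (-1 - δ)) := by
    simp [pd, (hasFDerivAt_fdel hδ ht hr).fderiv, eVec]
  have hi (i : Fin 3) : pd i.succ (fdel δ) p = (‖p.2‖⁻¹ • p.2) i := by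
    simp [pd, (hasFDerivAt_fdel hδ ht hr).fderiv, eVec, EuclideanSpace.inner_single_right]
  rw [fdelGrad, Prod.map_apply', mk_eq_sum_smul_eVec]
  simp only [P2, Fin.sum_univ_succ (n := 3), h0, hi, map_add, map_sum, map_smul, smul_eq_mul]
  simp [eta, pd]

lemma contDiffAt_fdelGrad (ht : p.1 ≠ 0) (hr : rr p ≠ 0) : ContDiffAt ℝ 1 (fdelGrad δ) p := by
  have hx : p.2 ≠ 0 := norm_ne_zero_iff.1 hr
  have hpow : ContDiffAt ℝ 1 (fun t : ℝ => 1 - t ^ (-1 - δ)) p.1 :=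
    contDiffAt_const.sub (Real.contDiffAt_rpow_const_of_ne ht)
  exact hpow.prodMap' (((contDiffAt_norm ℝ hx).inv hr).smul contDiffAt_id)

/-- The right-hand side is `□f_δ`. -/
lemma divergence_fdelGrad (ht : p.1 ≠ 0) (hr : rr p ≠ 0) :
    divergence (fdelGrad δ) p = (1 + δ) * p.1 ^ (-2 - δ) + 2 * (rr p)⁻¹ := by
  have hx : p.2 ≠ 0 := norm_ne_zero_iff.1 hr
  have htime : HasDerivAt (fun t : ℝ => 1 - t ^ (-1 - δ)) ((1 + δ) * p.1 ^ (-2 - δ)) p.1 := by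
    refine ((Real.hasDerivAt_rpow_const (Or.inl ht)).const_sub 1).congr_deriv ?_
    ring_nf
  have hspace : DifferentiableAt ℝ (fun x : EuclideanSpace ℝ (Fin 3) => ‖x‖⁻¹ • x) p.2 :=
    (((contDiffAt_norm ℝ hx).differentiableAt one_ne_zero).inv hr).smul differentiableAt_fun_id
  rw [fdelGrad, divergence_prodMap htime.differentiableAt hspace, divergence_eq_deriv,
    htime.deriv, divergence_inv_norm_smul hx]
  norm_num [rr]

lemma contDiffAt_multiplierField (ht : p.1 ≠ 0) (hr : rr p ≠ 0) :
    ContDiffAt ℝ 1 (multiplierField δ) p :=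
  ((contDiffAt_fst.pow 2).mul (contDiffAt_inv_rr hr)).smul (contDiffAt_fdelGrad ht hr)

lemma divergence_multiplierField (ht : 0 < p.1) (hr : rr p ≠ 0) :
    divergence (multiplierField δ) p =
      (2 * p.1 - (1 - δ) * p.1 ^ (-δ)) * (rr p)⁻¹ + p.1 ^ 2 * (rr p)⁻¹ ^ 2 := by
  have hinv : HasFDerivAt (fun q => (rr q)⁻¹) _ p :=
    (hasDerivAt_inv hr).comp_hasFDerivAt p (hasFDerivAt_rr hr)
  have hweight : HasFDerivAt (fun q : Spc => q.1 ^ 2 * (rr q)⁻¹) _ p :=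
    (hasFDerivAt_fst.pow 2).mul hinv
  have h1 : p.1 ^ (-1 - δ) = p.1 ^ (-δ) * p.1⁻¹ := by
    rw [← Real.rpow_neg_one, ← Real.rpow_add ht]; ring_nf
  have h2 : p.1 ^ (-2 - δ) = p.1 ^ (-δ) * p.1⁻¹ ^ 2 := by
    rw [← Real.rpow_natCast, Real.inv_rpow ht.le, ← Real.rpow_neg ht.le, ← Real.rpow_add ht]
    push_cast; ring_nf
  rw [show multiplierField δ = fun q => (q.1 ^ 2 * (rr q)⁻¹) • fdelGrad δ q from rfl,
    divergence_smul hweight.differentiableAt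
    fun _ => (contDiffAt_fdelGrad ht.ne' hr).differentiableAt one_ne_zero,
    divergence_fdelGrad ht.ne' hr, hweight.fderiv]
  have hr' : ‖p.2‖ ≠ 0 := hr
  simp only [fdelGrad, rr, h1, h2, Prod.map_fst, Prod.map_snd, add_apply, smul_apply,
    ContinuousLinearMap.comp_apply, ContinuousLinearMap.coe_fst', ContinuousLinearMap.coe_snd',
    coe_innerSL_apply, inner_self_eq_norm_sq_to_K, ringHom_apply, map_smul, smul_eq_mul,
    nsmul_eq_mul, Nat.cast_ofNat, Nat.add_one_sub_one, pow_one]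
  field_simp
  ring

lemma le_divergence_multiplierField (hδ : 0 < δ) (ht : 4 ≤ p.1) (hr : 7 * p.1 ≤ 8 * rr p) :
    5 / 2 * (p.1 ^ 2 * (rr p)⁻¹ ^ 2) ≤
      divergence (multiplierField δ) p := by
  have ht0 : 0 < p.1 := by linarith
  have hr0 : 0 < rr p := by linarith
  have hpow : p.1 ^ (-δ) ≤ 1 := Real.rpow_le_one_of_one_le_of_nonpos (by linarith) (by linarith)
  have hpow0 : 0 < p.1 ^ (-δ) := Real.rpow_pos_of_pos ht0 _
  have hratio : p.1 * (rr p)⁻¹ ≤ 8 / 7 := by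
    rw [← div_eq_mul_inv, div_le_iff₀ hr0]; linarith
  have htime : 3 / 2 * p.1 * (p.1 * (rr p)⁻¹) ≤ 2 * p.1 - (1 - δ) * p.1 ^ (-δ) := by
    nlinarith
  rw [divergence_multiplierField ht0 hr0.ne']
  linarith [mul_le_mul_of_nonneg_right htime (inv_nonneg.2 hr0.le)]

end Field

section Estimate

variable {R'' T₀ τ δ : ℝ} {ψ : Spc → ℝ}

lemma four_le_and_le_rr_of_mem_Om (hT₀ : 4 ≤ T₀) (hR : -(8 * R'') ≤ T₀) {p : Spc}
    (hp : p ∈ Om T₀ R'') : 4 ≤ p.1 ∧ 7 * p.1 ≤ 8 * rr p := by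
  obtain ⟨ht, hr⟩ := hp
  constructor <;> linarith

lemma ip_eq_integral {F : Spc → ℝ} (hF : ∀ p ∉ Om T₀ R'', F p = 0) (G : Spc → ℝ) :
    ip T₀ R'' F G = ∫ p, F p * G p * p.1 ^ 2 :=
  setIntegral_eq_integral_of_forall_compl_eq_zero fun p hp => by simp [hF p hp]

lemma nrm_le_of_mul_ip_le {F G : Spc → ℝ} {c : ℝ} (hc : 0 < c) (hF : Continuous F)
    (hFc : HasCompactSupport F) (hG : Continuous G) (hGc : HasCompactSupport G)
    (h : c * ip T₀ R'' F F ≤ ip T₀ R'' F G) : nrm T₀ R'' F ≤ c⁻¹ * nrm T₀ R'' G := by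
  have hmem {H : Spc → ℝ} (hH : Continuous H) (hHc : HasCompactSupport H) :
      MemLp (fun p => H p * p.1) 2 (volume.restrict (Om T₀ R'')) :=
    ((hH.mul continuous_fst).memLp_of_hasCompactSupport hHc.mul_right).restrict _
  have hip (H K : Spc → ℝ) : ip T₀ R'' H K = ∫ p in Om T₀ R'', H p * p.1 * (K p * p.1) := by
    simp only [ip]; congr with p; ring
  simp only [nrm, hip] at h ⊢
  exact sqrt_integral_mul_self_le hc (hmem hF hFc) (hmem hG hGc) h

lemma P2_eq_of_tsupport (hδ : δ ≠ 0) (hsupp : ∀ p ∈ tsupport ψ, p.1 ≠ 0 ∧ rr p ≠ 0) :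
    P2 τ δ ψ = fun p => -2 * τ * fderiv ℝ ψ p (fdelGrad δ p) := by
  ext p
  by_cases hp : p ∈ tsupport ψ
  · exact P2_eq hδ (hsupp p hp).1 (hsupp p hp).2
  · simp [P2, pd, fderiv_of_notMem_tsupport (𝕜 := ℝ) hp]

lemma continuous_P2 (hδ : δ ≠ 0) (hψ : ContDiff ℝ 1 ψ)
    (hsupp : ∀ p ∈ tsupport ψ, p.1 ≠ 0 ∧ rr p ≠ 0) : Continuous (P2 τ δ ψ) := by
  rw [P2_eq_of_tsupport hδ hsupp]
  exact continuous_const.mul <| continuous_fderiv_apply_of_tsupport hψ fun p hp =>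
    (contDiffAt_fdelGrad (hsupp p hp).1 (hsupp p hp).2).continuousAt

lemma hasCompactSupport_P2 (hδ : δ ≠ 0) (hc : HasCompactSupport ψ)
    (hsupp : ∀ p ∈ tsupport ψ, p.1 ≠ 0 ∧ rr p ≠ 0) : HasCompactSupport (P2 τ δ ψ) := by
  rw [P2_eq_of_tsupport hδ hsupp]
  exact (hasCompactSupport_fderiv_apply hc _).mul_left

lemma continuous_inv_rr_mul (hψ : Continuous ψ) (hr : ∀ p ∈ tsupport ψ, rr p ≠ 0) :
    Continuous fun p => (rr p)⁻¹ * ψ p :=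
  continuous_of_tsupport fun p hp =>
    (contDiffAt_inv_rr (hr p (tsupport_mul_subset_right hp))).continuousAt.mul hψ.continuousAt

lemma integrable_sq_mul_divergence_multiplierField (hψ : ContDiff ℝ 1 ψ)
    (hc : HasCompactSupport ψ) (hsupp : ∀ p ∈ tsupport ψ, p.1 ≠ 0 ∧ rr p ≠ 0) :
    Integrable fun p => ψ p ^ 2 * divergence (multiplierField δ) p :=
  integrable_mul_divergence (hψ.pow 2)
    (hc.of_isClosed_subset (isClosed_tsupport _) tsupport_sq_subset) fun p hp =>
    have ⟨ht, hr⟩ := hsupp p (tsupport_sq_subset hp)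
    contDiffAt_multiplierField ht hr

lemma ip_inv_rr_mul_P2_eq (hδ : δ ≠ 0) (hψ : ContDiff ℝ 1 ψ) (hc : HasCompactSupport ψ)
    (hsupp : ∀ p ∈ tsupport ψ, p.1 ≠ 0 ∧ rr p ≠ 0) (hOm : tsupport ψ ⊆ Om T₀ R'') :
    ip T₀ R'' (fun p => (rr p)⁻¹ * ψ p) (P2 τ δ ψ) =
      τ * ∫ p, ψ p ^ 2 * divergence (multiplierField δ) p := by
  have hparts := integral_mul_divergence_eq_neg (μ := volume) (X := multiplierField δ) (hψ.pow 2)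
    (hc.of_isClosed_subset (isClosed_tsupport _) tsupport_sq_subset) fun p hp =>
    have ⟨ht, hr⟩ := hsupp p (tsupport_sq_subset hp)
    contDiffAt_multiplierField ht hr
  have hderiv (p : Spc) : fderiv ℝ (fun q => ψ q ^ 2) p = (2 * ψ p) • fderiv ℝ ψ p := by
    simpa using ((hψ.differentiable one_ne_zero p).hasFDerivAt.pow 2).fderiv
  rw [hparts, P2_eq_of_tsupport hδ hsupp,
    ip_eq_integral fun p hp => by simp [image_eq_zero_of_notMem_tsupport (mt (@hOm p) hp)],
    mul_neg, ← neg_mul, ← integral_const_mul]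
  congr with p
  simp only [hderiv, multiplierField, map_smul, FunLike.coe_smul, Pi.smul_apply, smul_eq_mul]
  ring

lemma mul_ip_le_ip_inv_rr_mul_P2 (hτ : 0 < τ) (hδ : 0 < δ) (hψ : ContDiff ℝ 1 ψ)
    (hc : HasCompactSupport ψ) (hsupp : ∀ p ∈ tsupport ψ, 4 ≤ p.1 ∧ 7 * p.1 ≤ 8 * rr p)
    (hOm : tsupport ψ ⊆ Om T₀ R'') :
    5 * τ / 2 * ip T₀ R'' (fun p => (rr p)⁻¹ * ψ p) (fun p => (rr p)⁻¹ * ψ p) ≤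
      ip T₀ R'' (fun p => (rr p)⁻¹ * ψ p) (P2 τ δ ψ) := by
  have hne : ∀ p ∈ tsupport ψ, p.1 ≠ 0 ∧ rr p ≠ 0 := fun p hp => by
    constructor <;> linarith [hsupp p hp]
  have hF := continuous_inv_rr_mul hψ.continuous fun p hp => (hne p hp).2
  have hFF : Integrable fun p : Spc => (rr p)⁻¹ * ψ p * ((rr p)⁻¹ * ψ p) * p.1 ^ 2 :=
    ((hF.mul hF).mul (continuous_fst.pow 2)).integrable_of_hasCompactSupport
      hc.mul_left.mul_left.mul_right
  have hpointwise (p : Spc) : 5 / 2 * ((rr p)⁻¹ * ψ p * ((rr p)⁻¹ * ψ p) * p.1 ^ 2) ≤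
      ψ p ^ 2 * divergence (multiplierField δ) p := by
    by_cases hp : p ∈ tsupport ψ
    · linarith [mul_le_mul_of_nonneg_left
        (le_divergence_multiplierField hδ (hsupp p hp).1 (hsupp p hp).2) (sq_nonneg (ψ p))]
    · simp [image_eq_zero_of_notMem_tsupport hp]
  rw [ip_inv_rr_mul_P2_eq hδ.ne' hψ hc hne hOm,
    ip_eq_integral fun p hp => by simp [image_eq_zero_of_notMem_tsupport (mt (@hOm p) hp)]]
  calc
    5 * τ / 2 * ∫ p, (rr p)⁻¹ * ψ p * ((rr p)⁻¹ * ψ p) * p.1 ^ 2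
      = τ * ∫ p, 5 / 2 * ((rr p)⁻¹ * ψ p * ((rr p)⁻¹ * ψ p) * p.1 ^ 2) := by
        rw [integral_const_mul]; ring
    _ ≤ τ * ∫ p, ψ p ^ 2 * divergence (multiplierField δ) p :=
        mul_le_mul_of_nonneg_left (integral_mono (hFF.const_mul _)
          (integrable_sq_mul_divergence_multiplierField hψ hc hne) hpointwise) hτ.le

end Estimate

theorem stmt10_general {R'' T₀ τ δ : ℝ} {ψ : Spc → ℝ} (hT₀ : 4 ≤ T₀) (hR : -(8 * R'') ≤ T₀)
    (hτ : 0 < τ) (hδ : 0 < δ) (hψ : ContDiff ℝ 1 ψ) (hc : HasCompactSupport ψ)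
    (hOm : tsupport ψ ⊆ Om T₀ R'') :
    nrm T₀ R'' (fun p => (rr p)⁻¹ * ψ p) ≤ 2 / (5 * τ) * nrm T₀ R'' (P2 τ δ ψ) := by
  have hsupp : ∀ p ∈ tsupport ψ, 4 ≤ p.1 ∧ 7 * p.1 ≤ 8 * rr p := fun p hp =>
    four_le_and_le_rr_of_mem_Om hT₀ hR (hOm hp)
  have hne : ∀ p ∈ tsupport ψ, p.1 ≠ 0 ∧ rr p ≠ 0 := fun p hp => by
    constructor <;> linarith [hsupp p hp]
  rw [← inv_div]
  exact nrm_le_of_mul_ip_le (by positivity)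
    (continuous_inv_rr_mul hψ.continuous fun p hp => (hne p hp).2) hc.mul_left
    (continuous_P2 hδ.ne' hψ hne) (hasCompactSupport_P2 hδ.ne' hc hne)
    (mul_ip_le_ip_inv_rr_mul_P2 hτ hδ hψ hc hsupp hOm)

/-- Lemma 3.8 of the paper, a Hardy-type inequality:
`‖r⁻¹ψ‖ ≤ (2/(5τ))‖P₂ψ‖` for `T₀` large enough. -/
theorem stmt10 (R R'' : ℝ) (hRR : R'' < R) :
    ∃ T₀star : ℝ,
      ∀ T₀, T₀star ≤ T₀ → ∀ τ : ℝ, 0 < τ → ∀ δ, 0 < δ → δ < 1 / 2 →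
        ∀ ψ : Spc → ℝ, ContDiff ℝ 1 ψ → HasCompactSupport ψ →
          tsupport ψ ⊆ OmO T₀ R'' ∩ {p : Spc | rr p - p.1 < R} →
          nrm T₀ R'' (fun p => (rr p)⁻¹ * ψ p) ≤ 2 / (5 * τ) * nrm T₀ R'' (P2 τ δ ψ) := by
  exact ⟨max 4 (-(8 * R'')), fun T₀ hT₀ τ hτ δ hδ _ ψ hψ hc hsupp =>
    stmt10_general (le_of_max_le_left hT₀) (le_of_max_le_right hT₀) hτ hδ hψ hc
      fun _ hp => ⟨(hsupp hp).1.1.le, (hsupp hp).1.2⟩⟩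

end UCP
end
end

section
/- Fix R > R''. Let ∂̸ψ := (∂_jψ − ω_j ∂_rψ)_{j=1,2,3} denote the angular derivatives, with |∂̸ψ|² = Σ_j (∂_jψ − ω_j∂_rψ)². There exist T₀* depending only on R and R'', an absolute threshold τ₀ ≥ 1, and an absolute constant C > 0 (independent of τ, T₀, δ, ψ) such that for every T₀ ≥ T₀*, τ ≥ τ₀, δ ∈ (0,1/2), and every twice continuously differentiable compactly supported real-valued ψ on Ω_{T₀,R''} with supp ψ ⊂ {r − t < R}: ‖r^{−1}∂̸ψ‖² ≤ C(T₀^{−2}‖P₁ψ‖² + τ^{−1}‖P₂ψ‖² + τ²T₀^{−1}‖t^{−δ/2−1}ψ‖² + T₀^{−1}‖t^{−δ/2−1}∂_tψ‖²), where ‖r^{−1}∂̸ψ‖² := ∫_{Ω_{T₀,R''}} r^{−2}|∂̸ψ|² t² dx dt. -/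
noncomputable section
open MeasureTheory Real Set Filter Topology

namespace UCP

/-- `‖r⁻¹∂̸ψ‖² = ∫_{Ω_{T₀,R''}} r^{-2} Σ_j (∂_jψ - ω_j ∂_rψ)² t² dx dt`. -/
def angNorm2 (T₀ R'' : ℝ) (ψ : Spc → ℝ) : ℝ :=
  ∫ p in Om T₀ R'',
    (rr p)⁻¹ ^ 2 * (∑ j : Fin 3, (dxi j ψ p - (p.2 j / rr p) * dr ψ p) ^ 2) * p.1 ^ 2

/-!
Write `Q = ∂^α f ∂_α ψ`, so that `P₂ψ = -2τQ`. Away from the origin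
`|∂̸ψ|² = ∂^αψ ∂_αψ + (∂_tψ)² - (∂_rψ)²`, and Green's identity for `□` turns the first term into
`-ψ□ψ = -ψP₁ψ + τ²(∂^α f ∂_α f)ψ²`, where `∂^α f ∂_α f ≤ 2t^{-δ-1}`. The difference
`(∂_tψ)² - (∂_rψ)²` contains the factor `∂_tψ + ∂_rψ = Q + t^{-δ-1}∂_tψ`, so it is controlled by `Q`
and by `∂_tψ` with a decaying weight. The remaining `∫ψ²`, from Cauchy-Schwarz on `ψP₁ψ`, is at
most `4‖Q‖²` by a Hardy inequality: the vector field `t∂^α f` has divergence at least `1`.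
-/

/-! ### Calculus of test functions -/

section TestFunctions

lemma continuous_mul_of_continuousAt_tsupport {X M : Type*} [TopologicalSpace X]
    [TopologicalSpace M] [MulZeroClass M] [ContinuousMul M] {a u : X → M}
    (ha : ∀ x ∈ tsupport u, ContinuousAt a x) (hu : Continuous u) :
    Continuous fun x => a x * u x :=
  continuous_of_tsupport fun x hx =>
    (ha x (tsupport_mul_subset_right hx)).mul hu.continuousAt

variable {α : Fin 4} {u v w : Spc → ℝ} {p : Spc}

lemma tsupport_pd_subset : tsupport (pd α u) ⊆ tsupport u :=
  tsupport_fderiv_apply_subset ℝ (eVec α)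

lemma pd_eq_zero_of_notMem_tsupport (hp : p ∉ tsupport u) : pd α u p = 0 :=
  image_eq_zero_of_notMem_tsupport fun h => hp (tsupport_pd_subset h)

lemma hasCompactSupport_pd (hu : HasCompactSupport u) : HasCompactSupport (pd α u) :=
  hu.fderiv_apply ℝ (eVec α)

lemma contDiff_pd {m n : WithTop ℕ∞} (hu : ContDiff ℝ n u) (hmn : m + 1 ≤ n) :
    ContDiff ℝ m (pd α u) :=
  (hu.fderiv_right hmn).clm_apply contDiff_const

lemma contDiffAt_pd {m n : WithTop ℕ∞} (hu : ContDiffAt ℝ n u p) (hmn : m + 1 ≤ n) :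
    ContDiffAt ℝ m (pd α u) p :=
  (hu.fderiv_right hmn).clm_apply contDiffAt_const

lemma pd_congr_of_eventuallyEq (h : u =ᶠ[𝓝 p] v) : pd α u p = pd α v p := by
  rw [pd, h.fderiv_eq, pd]

lemma pd_sub (hu : DifferentiableAt ℝ u p) (hv : DifferentiableAt ℝ v p) :
    pd α (fun q => u q - v q) p = pd α u p - pd α v p := by
  rw [pd, fderiv_fun_sub hu hv, sub_apply, pd, pd]

lemma pd_mul (hu : DifferentiableAt ℝ u p) (hv : DifferentiableAt ℝ v p) :
    pd α (fun q => u q * v q) p = u p * pd α v p + v p * pd α u p := by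
  rw [pd, fderiv_fun_mul hu hv, add_apply, smul_apply, smul_apply, pd, pd, smul_eq_mul, smul_eq_mul]

instance isAddHaarMeasure_volume_spc : (volume : Measure Spc).IsAddHaarMeasure :=
  Measure.prod.instIsAddHaarMeasure volume volume

lemma integral_pd_mul_eq_neg (hv : ∀ p ∈ tsupport w, ContDiffAt ℝ 1 v p)
    (hw : ContDiff ℝ 1 w) (hwc : HasCompactSupport w) :
    ∫ p, pd α v p * w p = -∫ p, v p * pd α w p := by
  have hwd : Continuous (pd α w) := (contDiff_pd (m := 0) hw le_rfl).continuous
  have hvd : ∀ p ∈ tsupport w, ContinuousAt (pd α v) p := fun p hp =>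
    (contDiffAt_pd (m := 0) (hv p hp) le_rfl).continuousAt
  have hvc : ∀ p ∈ tsupport w, ContinuousAt v p := fun p hp => (hv p hp).continuousAt
  have h := integral_mul_fderiv_eq_neg_fderiv_mul_of_integrable (𝕜 := ℝ) (μ := volume)
    (f := v) (g := w) (v := eVec α)
    ((continuous_mul_of_continuousAt_tsupport hvd hw.continuous).integrable_of_hasCompactSupport
      hwc.mul_left)
    ((continuous_mul_of_continuousAt_tsupport (fun p hp => hvc p (tsupport_pd_subset hp))
      hwd).integrable_of_hasCompactSupport (hasCompactSupport_pd hwc).mul_left)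
    ((continuous_mul_of_continuousAt_tsupport hvc hw.continuous).integrable_of_hasCompactSupport
      hwc.mul_left)
    (fun p hp => (hv p hp).differentiableAt one_ne_zero)
    (fun p _ => hw.differentiable one_ne_zero p)
  exact neg_eq_iff_eq_neg.mp h.symm

end TestFunctions

/-! ### Green's identity for `□` -/

section Green

variable {u v w : Spc → ℝ} {p : Spc}

/-- The Minkowski pairing `∂^α u ∂_α v` of two gradients; it is the first-order part of both
conjugated operators, since `P₂ψ = -2τ ∂^α f ∂_α ψ` and `P₁ψ = □ψ + τ² (∂^α f ∂_α f) ψ`. -/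
def gradInner (u v : Spc → ℝ) (p : Spc) : ℝ := ∑ α : Fin 4, eta α * pd α u p * pd α v p

lemma gradInner_eq_neg_dt_add_sum_dxi (u v : Spc → ℝ) (p : Spc) :
    gradInner u v p = -(dt u p * dt v p) + ∑ i : Fin 3, dxi i u p * dxi i v p := by
  simp [gradInner, Fin.sum_univ_succ, eta, dt, dxi]

lemma box_eq_sum_eta_mul_pd_pd (u : Spc → ℝ) (p : Spc) :
    box u p = ∑ α : Fin 4, eta α * pd α (pd α u) p := by
  simp [box, Fin.sum_univ_succ, eta, dt, dxi]

lemma gradInner_mul_right (u : Spc → ℝ) (hv : DifferentiableAt ℝ v p)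
    (hw : DifferentiableAt ℝ w p) :
    gradInner u (fun q => v q * w q) p = v p * gradInner u w p + w p * gradInner u v p := by
  simp only [gradInner, pd_mul hv hw, Finset.mul_sum, ← Finset.sum_add_distrib]
  exact Finset.sum_congr rfl fun α _ => by ring

lemma gradInner_eq_zero_of_notMem_tsupport (hp : p ∉ tsupport w) : gradInner v w p = 0 := by
  simp [gradInner, pd_eq_zero_of_notMem_tsupport hp]

lemma hasCompactSupport_gradInner (hw : HasCompactSupport w) :
    HasCompactSupport (gradInner v w) :=
  hw.mono' fun _ hp => not_imp_comm.mp gradInner_eq_zero_of_notMem_tsupport hp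

lemma hasCompactSupport_box (hw : HasCompactSupport w) : HasCompactSupport (box w) :=
  hw.mono' fun p hp => by
    refine not_imp_comm.mp (fun h => ?_) hp
    have hpd : ∀ α, pd α (pd α w) p = 0 := fun α =>
      pd_eq_zero_of_notMem_tsupport fun h' => h (tsupport_pd_subset h')
    simp [box_eq_sum_eta_mul_pd_pd, hpd]

lemma continuousAt_box (hu : ContDiffAt ℝ 2 u p) : ContinuousAt (box u) p := by
  have hpd : ∀ α, ContinuousAt (pd α (pd α u)) p := fun α =>
    (contDiffAt_pd (m := 0) (contDiffAt_pd (m := 1) hu one_add_one_eq_two.le) le_rfl).continuousAt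
  simp only [funext (box_eq_sum_eta_mul_pd_pd u)]
  fun_prop

lemma continuous_box (hu : ContDiff ℝ 2 u) : Continuous (box u) :=
  continuous_iff_continuousAt.mpr fun _ => continuousAt_box hu.contDiffAt

lemma continuous_pd_mul_pd (α : Fin 4) (hv : ∀ p ∈ tsupport w, ContDiffAt ℝ 1 v p)
    (hw : ContDiff ℝ 1 w) : Continuous fun p => pd α v p * pd α w p :=
  continuous_mul_of_continuousAt_tsupport
    (fun p hp => (contDiffAt_pd (m := 0) (hv p (tsupport_pd_subset hp)) le_rfl).continuousAt)
    (contDiff_pd (m := 0) hw le_rfl).continuous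

lemma continuous_gradInner (hv : ∀ p ∈ tsupport w, ContDiffAt ℝ 1 v p) (hw : ContDiff ℝ 1 w) :
    Continuous (gradInner v w) := by
  have h := fun α => continuous_pd_mul_pd α hv hw
  unfold gradInner
  simp only [mul_assoc]
  fun_prop

lemma integral_gradInner_eq_neg (hv : ∀ p ∈ tsupport w, ContDiffAt ℝ 2 v p)
    (hw : ContDiff ℝ 1 w) (hwc : HasCompactSupport w) :
    ∫ p, gradInner v w p = -∫ p, box v p * w p := by
  have hpdv : ∀ α, ∀ p ∈ tsupport w, ContDiffAt ℝ 1 (pd α v) p := fun α p hp =>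
    contDiffAt_pd (hv p hp) one_add_one_eq_two.le
  have hgrad : ∀ α, Integrable fun p => pd α v p * pd α w p := fun α =>
    (continuous_pd_mul_pd α (fun p hp => (hv p hp).of_le one_le_two)
      hw).integrable_of_hasCompactSupport (hasCompactSupport_pd hwc).mul_left
  have hbox : ∀ α, Integrable fun p => pd α (pd α v) p * w p := fun α =>
    (continuous_mul_of_continuousAt_tsupport
      (fun p hp => (contDiffAt_pd (m := 0) (hpdv α p hp) le_rfl).continuousAt)
      hw.continuous).integrable_of_hasCompactSupport hwc.mul_left
  simp only [gradInner, box_eq_sum_eta_mul_pd_pd, Finset.sum_mul, mul_assoc]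
  rw [integral_finsetSum _ fun α _ => (hgrad α).const_mul _,
    integral_finsetSum _ fun α _ => (hbox α).const_mul _, ← Finset.sum_neg_distrib]
  refine Finset.sum_congr rfl fun α _ => ?_
  rw [integral_const_mul, integral_const_mul, integral_pd_mul_eq_neg (hpdv α) hw hwc, mul_neg,
    neg_neg]

lemma integrable_gradInner (hv : ∀ p ∈ tsupport w, ContDiffAt ℝ 1 v p) (hw : ContDiff ℝ 1 w)
    (hwc : HasCompactSupport w) : Integrable (gradInner v w) :=
  (continuous_gradInner hv hw).integrable_of_hasCompactSupport (hasCompactSupport_gradInner hwc)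

lemma integrable_box_mul (hv : ∀ p ∈ tsupport w, ContDiffAt ℝ 2 v p) (hw : Continuous w)
    (hwc : HasCompactSupport w) : Integrable fun p => box v p * w p :=
  (continuous_mul_of_continuousAt_tsupport (fun p hp => continuousAt_box (hv p hp))
    hw).integrable_of_hasCompactSupport hwc.mul_left

lemma integrable_gradInner_add_box_mul (hv : ∀ p ∈ tsupport w, ContDiffAt ℝ 2 v p)
    (hw : ContDiff ℝ 1 w) (hwc : HasCompactSupport w) :
    Integrable fun p => gradInner v w p + box v p * w p :=
  (integrable_gradInner (fun p hp => (hv p hp).of_le one_le_two) hw hwc).add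
    (integrable_box_mul hv hw.continuous hwc)

lemma setIntegral_gradInner_add_box_mul_eq_zero {Ω : Set Spc} (hΩ : tsupport w ⊆ Ω)
    (hv : ∀ p ∈ tsupport w, ContDiffAt ℝ 2 v p) (hw : ContDiff ℝ 1 w)
    (hwc : HasCompactSupport w) :
    ∫ p in Ω, (gradInner v w p + box v p * w p) = 0 := by
  have hgrad := integrable_gradInner (fun p hp => (hv p hp).of_le one_le_two) hw hwc
  have hbox := integrable_box_mul hv hw.continuous hwc
  rw [setIntegral_eq_integral_of_forall_compl_eq_zero, integral_add hgrad hbox,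
    integral_gradInner_eq_neg hv hw hwc, neg_add_cancel]
  intro p hp
  have hp' : p ∉ tsupport w := fun h => hp (hΩ h)
  rw [gradInner_eq_zero_of_notMem_tsupport hp', image_eq_zero_of_notMem_tsupport hp', mul_zero,
    add_zero]

end Green

/-! ### The weight `f_δ` -/

section Weight

variable {δ : ℝ} {p : Spc}

/-- The open set `{t > 0, x ≠ 0}`, on which `r`, the powers of `t` and hence the weights `f_δ` are
smooth. -/
def smoothSet : Set Spc := {p | 0 < p.1 ∧ rr p ≠ 0}

lemma continuous_rr : Continuous rr := by
  unfold rr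
  fun_prop

lemma eventually_mem_smoothSet (hp : p ∈ smoothSet) : ∀ᶠ q in 𝓝 p, q ∈ smoothSet :=
  (continuous_fst.continuousAt.eventually (lt_mem_nhds hp.1)).and
    (continuous_rr.continuousAt.eventually_ne hp.2)

lemma contDiffAt_rr {n : WithTop ℕ∞} (hr : rr p ≠ 0) : ContDiffAt ℝ n rr p :=
  contDiffAt_snd.norm ℝ (norm_ne_zero_iff.mp hr)

lemma contDiffAt_fst_rpow {n : WithTop ℕ∞} (c : ℝ) (ht : 0 < p.1) :
    ContDiffAt ℝ n (fun q : Spc => q.1 ^ c) p :=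
  contDiffAt_fst.rpow_const_of_ne ht.ne'

lemma contDiffAt_fdel {n : WithTop ℕ∞} (δ : ℝ) (hp : p ∈ smoothSet) :
    ContDiffAt ℝ n (fdel δ) p :=
  ((contDiffAt_rr hp.2).sub contDiffAt_fst).sub
    (contDiffAt_const.mul (contDiffAt_fst_rpow (-δ) hp.1))

lemma pd_comp_fst {g : ℝ → ℝ} {g' : ℝ} (α : Fin 4) (hg : HasDerivAt g g' p.1) :
    pd α (fun q => g q.1) p = g' * (eVec α).1 := by
  have h : HasFDerivAt (fun q : Spc => g q.1) (g' • ContinuousLinearMap.fst ℝ ℝ _) p :=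
    HasDerivAt.comp_hasFDerivAt p hg hasFDerivAt_fst
  rw [pd, h.fderiv]
  simp

lemma dt_comp_fst {g : ℝ → ℝ} {g' : ℝ} (hg : HasDerivAt g g' p.1) :
    dt (fun q => g q.1) p = g' := by
  rw [dt, pd_comp_fst 0 hg]
  simp [eVec]

lemma dxi_comp_fst {g : ℝ → ℝ} (i : Fin 3) (hg : DifferentiableAt ℝ g p.1) :
    dxi i (fun q => g q.1) p = 0 := by
  rw [dxi, pd_comp_fst i.succ hg.hasDerivAt]
  simp [eVec]

lemma pd_rr (α : Fin 4) (hr : rr p ≠ 0) :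
    pd α rr p = inner ℝ p.2 (eVec α).2 / rr p := by
  have h : HasFDerivAt (fun q : Spc => √(‖q.2‖ ^ 2)) _ p :=
    hasFDerivAt_snd.norm_sq.sqrt (pow_ne_zero 2 hr)
  simp only [sqrt_sq (norm_nonneg _)] at h
  rw [pd, show rr = fun q => ‖q.2‖ from rfl, h.fderiv]
  simp only [one_div, mul_inv_rev, smul_apply, ContinuousLinearMap.comp_apply,
    ContinuousLinearMap.coe_snd', coe_innerSL_apply, nsmul_eq_mul, Nat.cast_ofNat, smul_eq_mul]
  field_simp

lemma dt_rr (hr : rr p ≠ 0) : dt rr p = 0 := by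
  rw [dt, pd_rr 0 hr]
  simp [eVec]

lemma dxi_rr (i : Fin 3) (hr : rr p ≠ 0) : dxi i rr p = p.2 i / rr p := by
  rw [dxi, pd_rr i.succ hr]
  simp [eVec, EuclideanSpace.inner_single_right]

lemma dxi_coord (i : Fin 3) (p : Spc) : dxi i (fun q => q.2 i) p = 1 := by
  have h : HasFDerivAt (fun q : Spc => q.2 i) _ p :=
    ((EuclideanSpace.proj (𝕜 := ℝ) i).comp (ContinuousLinearMap.snd ℝ ℝ _)).hasFDerivAt
  rw [dxi, pd, h.fderiv]
  simp [eVec]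

lemma sum_dir_sq (hr : rr p ≠ 0) : ∑ i : Fin 3, (p.2 i / rr p) ^ 2 = 1 := by
  simp only [div_pow, ← Finset.sum_div]
  rw [← EuclideanSpace.real_norm_sq_eq, ← rr, div_self (pow_ne_zero 2 hr)]

lemma dxi_dir (i : Fin 3) (hr : rr p ≠ 0) :
    dxi i (fun q => q.2 i / rr q) p = 1 / rr p - (p.2 i / rr p) ^ 2 / rr p := by
  have hdir : DifferentiableAt ℝ (fun q : Spc => q.2 i / rr q) p := by
    have := (contDiffAt_rr (n := 1) hr).differentiableAt one_ne_zero
    fun_prop (disch := exact hr)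
  have hcoord : (fun q : Spc => q.2 i) =ᶠ[𝓝 p] fun q => q.2 i / rr q * rr q := by
    filter_upwards [continuous_rr.continuousAt.eventually_ne hr] with q hq
    rw [div_mul_cancel₀ _ hq]
  have hprod : 1 = p.2 i / rr p * (p.2 i / rr p) + rr p * dxi i (fun q => q.2 i / rr q) p := by
    have hrr : pd i.succ rr p = p.2 i / rr p := dxi_rr i hr
    rw [← dxi_coord i p, dxi, pd_congr_of_eventuallyEq hcoord,
      pd_mul hdir ((contDiffAt_rr hr).differentiableAt one_ne_zero), hrr, ← dxi]
  rw [← sub_div, eq_div_iff hr]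
  linear_combination -hprod

lemma hasDerivAt_time_profile (hδ : δ ≠ 0) {t : ℝ} (ht : 0 < t) :
    HasDerivAt (fun t => t + δ⁻¹ * t ^ (-δ)) (1 - t ^ (-δ - 1)) t := by
  have hpow := (hasDerivAt_rpow_const (p := -δ) (Or.inl ht.ne')).const_mul δ⁻¹
  exact ((hasDerivAt_id' t).add hpow).congr_deriv (by field_simp; ring)

lemma fdel_eq_rr_sub (δ : ℝ) : fdel δ = fun q => rr q - (q.1 + δ⁻¹ * q.1 ^ (-δ)) :=
  funext fun _ => sub_sub _ _ _

lemma pd_fdel (hδ : δ ≠ 0) (α : Fin 4) (hp : p ∈ smoothSet) :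
    pd α (fdel δ) p = pd α rr p - pd α (fun q => q.1 + δ⁻¹ * q.1 ^ (-δ)) p := by
  have hg : DifferentiableAt ℝ (fun q : Spc => q.1 + δ⁻¹ * q.1 ^ (-δ)) p :=
    (hasDerivAt_time_profile hδ hp.1).differentiableAt.comp p differentiableAt_fst
  rw [fdel_eq_rr_sub, pd_sub ((contDiffAt_rr hp.2).differentiableAt one_ne_zero) hg]

lemma dt_fdel (hδ : δ ≠ 0) (hp : p ∈ smoothSet) : dt (fdel δ) p = p.1 ^ (-δ - 1) - 1 := by
  rw [dt, pd_fdel hδ 0 hp, ← dt, dt_rr hp.2, ← dt,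
    dt_comp_fst (hasDerivAt_time_profile hδ hp.1)]
  ring

lemma dxi_fdel (hδ : δ ≠ 0) (i : Fin 3) (hp : p ∈ smoothSet) :
    dxi i (fdel δ) p = p.2 i / rr p := by
  rw [dxi, pd_fdel hδ i.succ hp, ← dxi, dxi_rr i hp.2, ← dxi,
    dxi_comp_fst i (hasDerivAt_time_profile hδ hp.1).differentiableAt, sub_zero]

lemma dt_dt_fdel (hδ : δ ≠ 0) (hp : p ∈ smoothSet) :
    dt (dt (fdel δ)) p = -(δ + 1) * p.1 ^ (-δ - 2) := by
  have h : dt (fdel δ) =ᶠ[𝓝 p] fun q => q.1 ^ (-δ - 1) - 1 :=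
    (eventually_mem_smoothSet hp).mono fun q hq => dt_fdel hδ hq
  have hderiv := (hasDerivAt_rpow_const (p := -δ - 1) (Or.inl hp.1.ne')).sub_const 1
  rw [dt, pd_congr_of_eventuallyEq h, ← dt, dt_comp_fst hderiv]
  ring_nf

lemma dxi_dxi_fdel (hδ : δ ≠ 0) (i : Fin 3) (hp : p ∈ smoothSet) :
    dxi i (dxi i (fdel δ)) p = 1 / rr p - (p.2 i / rr p) ^ 2 / rr p := by
  have h : dxi i (fdel δ) =ᶠ[𝓝 p] fun q => q.2 i / rr q :=
    (eventually_mem_smoothSet hp).mono fun q hq => dxi_fdel hδ i hq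
  rw [dxi, pd_congr_of_eventuallyEq h, ← dxi, dxi_dir i hp.2]

lemma box_fdel (hδ : δ ≠ 0) (hp : p ∈ smoothSet) :
    box (fdel δ) p = (δ + 1) * p.1 ^ (-δ - 2) + 2 / rr p := by
  simp only [box, dt_dt_fdel hδ hp, dxi_dxi_fdel hδ _ hp, Finset.sum_sub_distrib,
    ← Finset.sum_div, sum_dir_sq hp.2, Finset.sum_const, Finset.card_univ, Fintype.card_fin]
  ring

lemma gradInner_fdel (hδ : δ ≠ 0) (u : Spc → ℝ) (hp : p ∈ smoothSet) :
    gradInner (fdel δ) u p = (1 - p.1 ^ (-δ - 1)) * dt u p + dr u p := by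
  simp only [gradInner_eq_neg_dt_add_sum_dxi, dt_fdel hδ hp, dxi_fdel hδ _ hp, dr]
  ring

lemma gradInner_fdel_self (hδ : δ ≠ 0) (hp : p ∈ smoothSet) :
    gradInner (fdel δ) (fdel δ) p = 2 * p.1 ^ (-δ - 1) - (p.1 ^ (-δ - 1)) ^ 2 := by
  simp only [gradInner_eq_neg_dt_add_sum_dxi, dt_fdel hδ hp, dxi_fdel hδ _ hp, ← sq,
    sum_dir_sq hp.2]
  ring

-- The left-hand side is the divergence of `t ∂^α f_δ`; it equals `1 + δ t^(-δ-1) + 2 t / r`.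
lemma one_le_fst_mul_box_fdel_sub_dt_fdel (hδ : 0 < δ) (hp : p ∈ smoothSet) :
    1 ≤ p.1 * box (fdel δ) p - dt (fdel δ) p := by
  have ht : 0 < p.1 := hp.1
  have hr : 0 ≤ rr p := norm_nonneg p.2
  have hpow : p.1 * p.1 ^ (-δ - 2) = p.1 ^ (-δ - 1) := by
    rw [← rpow_one_add' ht.le (by linarith)]
    ring_nf
  calc 1 ≤ 1 + δ * p.1 ^ (-δ - 1) + 2 * p.1 / rr p := by
        rw [add_assoc, le_add_iff_nonneg_right]
        positivity
    _ = p.1 * box (fdel δ) p - dt (fdel δ) p := by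
        rw [box_fdel hδ.ne' hp, dt_fdel hδ.ne' hp]
        linear_combination -(δ + 1) * hpow

end Weight

/-! ### The weighted norm on `Ω` -/

section WeightedNorm

variable {T R : ℝ} {p : Spc}

lemma measurableSet_Om : MeasurableSet (Om T R) :=
  (measurableSet_le measurable_const measurable_fst).inter
    (measurableSet_lt measurable_const (continuous_rr.measurable.sub measurable_fst))

lemma OmO_subset_Om : OmO T R ⊆ Om T R := fun _ hp => ⟨hp.1.le, hp.2⟩

lemma fst_le_two_mul_rr (hTR : -2 * R ≤ T) (hp : p ∈ Om T R) : p.1 ≤ 2 * rr p := by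
  linarith [hp.1, hp.2]

lemma Om_subset_smoothSet (hT : 0 < T) (hTR : -2 * R ≤ T) : Om T R ⊆ smoothSet := fun p hp =>
  ⟨hT.trans_le hp.1, fun hr => by linarith [hp.1, fst_le_two_mul_rr hTR hp]⟩

lemma nrm_sq (T R : ℝ) (F : Spc → ℝ) : nrm T R F ^ 2 = ∫ p in Om T R, F p ^ 2 * p.1 ^ 2 := by
  simp only [nrm, ip, ← sq]
  exact sq_sqrt (integral_nonneg fun p => by positivity)

lemma nrm_const_mul_sq (T R c : ℝ) (F : Spc → ℝ) :
    nrm T R (fun p => c * F p) ^ 2 = c ^ 2 * nrm T R F ^ 2 := by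
  simp only [nrm_sq, mul_pow, mul_assoc, integral_const_mul]

lemma integrableOn_sq_mul_fst_sq {F : Spc → ℝ} (hF : Continuous F) (hFc : HasCompactSupport F) :
    IntegrableOn (fun p => F p ^ 2 * p.1 ^ 2) (Om T R) := by
  refine (Continuous.integrable_of_hasCompactSupport (by fun_prop) ?_).integrableOn
  simp only [sq (F _), mul_assoc]
  exact hFc.mul_right

lemma integrableOn_gradInner_sq_mul_fst_sq {f ψ : Spc → ℝ}
    (hf : ∀ p ∈ tsupport ψ, ContDiffAt ℝ 1 f p) (hψ : ContDiff ℝ 1 ψ)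
    (hψc : HasCompactSupport ψ) :
    IntegrableOn (fun p => gradInner f ψ p ^ 2 * p.1 ^ 2) (Om T R) :=
  integrableOn_sq_mul_fst_sq (continuous_gradInner hf hψ) (hasCompactSupport_gradInner hψc)

lemma gradInner_fst (f : Spc → ℝ) (p : Spc) : gradInner f (fun q => q.1) p = -dt f p := by
  have ht : dt (fun q => q.1) p = 1 := dt_comp_fst (hasDerivAt_id' p.1)
  have hx : ∀ i, dxi i (fun q => q.1) p = 0 := fun i => dxi_comp_fst i differentiableAt_fun_id
  simp [gradInner_eq_neg_dt_add_sum_dxi, ht, hx]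

lemma gradInner_fst_mul_mul_self {f ψ : Spc → ℝ} (hψ : DifferentiableAt ℝ ψ p) :
    gradInner f (fun q => q.1 * (ψ q * ψ q)) p =
      2 * p.1 * ψ p * gradInner f ψ p - ψ p ^ 2 * dt f p := by
  have hψψ : DifferentiableAt ℝ (fun q => ψ q * ψ q) p := hψ.mul hψ
  rw [gradInner_mul_right f differentiableAt_fst hψψ, gradInner_mul_right f hψ hψ, gradInner_fst]
  ring

-- Green's identity for the multiplier `t ψ²`, completing the square `(ψ + 2 t ∂^α f ∂_α ψ)²`.
lemma nrm_inv_fst_mul_sq_le {f ψ : Spc → ℝ} (hT : 0 < T)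
    (hf : ∀ p ∈ tsupport ψ, ContDiffAt ℝ 2 f p)
    (hdiv : ∀ p ∈ Om T R, 1 ≤ p.1 * box f p - dt f p) (hψ : ContDiff ℝ 1 ψ)
    (hψc : HasCompactSupport ψ) (hsupp : tsupport ψ ⊆ Om T R) :
    nrm T R (fun p => p.1⁻¹ * ψ p) ^ 2 ≤ 4 * nrm T R (gradInner f ψ) ^ 2 := by
  set w : Spc → ℝ := fun p => p.1 * (ψ p * ψ p)
  have hw : ContDiff ℝ 1 w := contDiff_fst.mul (hψ.mul hψ)
  have hwc : HasCompactSupport w := hψc.mul_right.mul_left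
  have hwψ : tsupport w ⊆ tsupport ψ :=
    (tsupport_mul_subset_right (g := fun p => ψ p * ψ p)).trans tsupport_mul_subset_left
  have hfw : ∀ p ∈ tsupport w, ContDiffAt ℝ 2 f p := fun p hp => hf p (hwψ hp)
  have hbound : ∀ p ∈ Om T R, (p.1⁻¹ * ψ p) ^ 2 * p.1 ^ 2 ≤
      2 * (gradInner f w p + box f p * w p) + 4 * (gradInner f ψ p ^ 2 * p.1 ^ 2) := by
    intro p hp
    have ht : p.1 ≠ 0 := (hT.trans_le hp.1).ne'
    have hlhs : (p.1⁻¹ * ψ p) ^ 2 * p.1 ^ 2 = ψ p ^ 2 := by field_simp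
    rw [hlhs, gradInner_fst_mul_mul_self (hψ.differentiable one_ne_zero p)]
    linarith [mul_le_mul_of_nonneg_right (hdiv p hp) (sq_nonneg (ψ p)),
      sq_nonneg (ψ p + 2 * p.1 * gradInner f ψ p)]
  have hgreen : IntegrableOn (fun p => gradInner f w p + box f p * w p) (Om T R) :=
    (integrable_gradInner_add_box_mul hfw hw hwc).integrableOn
  have hQ : IntegrableOn (fun p => gradInner f ψ p ^ 2 * p.1 ^ 2) (Om T R) :=
    integrableOn_gradInner_sq_mul_fst_sq (fun p hp => (hf p hp).of_le one_le_two) hψ hψc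
  calc nrm T R (fun p => p.1⁻¹ * ψ p) ^ 2
      ≤ ∫ p in Om T R, (2 * (gradInner f w p + box f p * w p) +
          4 * (gradInner f ψ p ^ 2 * p.1 ^ 2)) := by
        rw [nrm_sq]
        exact integral_mono_of_nonneg (.of_forall fun p => by positivity)
          ((hgreen.const_mul 2).add (hQ.const_mul 4))
          (ae_restrict_of_forall_mem measurableSet_Om hbound)
    _ = 4 * nrm T R (gradInner f ψ) ^ 2 := by
        rw [integral_add (hgreen.const_mul 2) (hQ.const_mul 4), integral_const_mul,
          setIntegral_gradInner_add_box_mul_eq_zero (hwψ.trans hsupp) hfw hw hwc, mul_zero,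
          zero_add, integral_const_mul, nrm_sq]

end WeightedNorm

/-! ### The angular derivatives -/

section Angular

variable {T R δ : ℝ} {ψ : Spc → ℝ} {p : Spc}

lemma sum_sub_mul_sum_mul_sq {ι : Type*} [Fintype ι] {a : ι → ℝ} (ha : ∑ i, a i ^ 2 = 1)
    (b : ι → ℝ) :
    ∑ j, (b j - a j * ∑ i, a i * b i) ^ 2 = ∑ j, b j ^ 2 - (∑ i, a i * b i) ^ 2 := by
  set s := ∑ i, a i * b i with hs
  have hexpand : ∀ j, (b j - a j * s) ^ 2 = b j ^ 2 - 2 * s * (a j * b j) + s ^ 2 * a j ^ 2 :=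
    fun j => by ring
  simp only [hexpand, Finset.sum_add_distrib, Finset.sum_sub_distrib, ← Finset.mul_sum, ha, ← hs]
  ring

/-- The squared length `|∂̸ψ|²` of the angular gradient, the integrand of `angNorm2`. -/
def angSq (ψ : Spc → ℝ) (p : Spc) : ℝ :=
  ∑ j : Fin 3, (dxi j ψ p - (p.2 j / rr p) * dr ψ p) ^ 2

lemma angSq_eq (ψ : Spc → ℝ) (hr : rr p ≠ 0) :
    angSq ψ p = gradInner ψ ψ p + (dt ψ p ^ 2 - dr ψ p ^ 2) := by
  simp only [angSq, dr, sum_sub_mul_sum_mul_sq (sum_dir_sq hr), gradInner_eq_neg_dt_add_sum_dxi,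
    ← sq]
  ring

lemma dt_sq_sub_dr_sq_le (hδ : δ ≠ 0) (ψ : Spc → ℝ) (hp : p ∈ smoothSet) :
    dt ψ p ^ 2 - dr ψ p ^ 2 ≤
      2 * gradInner (fdel δ) ψ p * dt ψ p + 2 * p.1 ^ (-δ - 1) * dt ψ p ^ 2 := by
  rw [gradInner_fdel hδ ψ hp]
  linarith [sq_nonneg (dt ψ p + dr ψ p)]

lemma rpow_le_inv_mul_rpow_neg {t c : ℝ} (hT : 1 ≤ T) (hTt : T ≤ t) (hc : c ≤ -δ - 1) :
    t ^ c ≤ T⁻¹ * t ^ (-δ) := by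
  have hT0 : 0 < T := one_pos.trans_le hT
  have ht : 0 < t := hT0.trans_le hTt
  calc t ^ c ≤ t ^ (-δ - 1) := rpow_le_rpow_of_exponent_le (hT.trans hTt) hc
    _ = t⁻¹ * t ^ (-δ) := by rw [rpow_sub_one ht.ne', div_eq_inv_mul]
    _ ≤ T⁻¹ * t ^ (-δ) := by gcongr

lemma rpow_mul_sq_mul_sq {t : ℝ} (ht : 0 < t) (δ x : ℝ) :
    (t ^ (-δ / 2 - 1) * x) ^ 2 * t ^ 2 = t ^ (-δ) * x ^ 2 := by
  have hpow : t ^ (-δ) = (t ^ (-δ / 2 - 1) * t) ^ 2 := by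
    rw [← rpow_add_one ht.ne', ← rpow_mul_natCast ht.le]
    ring_nf
  rw [hpow]
  ring

lemma angSq_le (hT : 1 ≤ T) (hTR : -2 * R ≤ T) (hδ : 0 < δ) (hδ1 : δ ≤ 1) (ψ : Spc → ℝ)
    (hp : p ∈ Om T R) :
    angSq ψ p ≤ gradInner ψ ψ p + gradInner (fdel δ) ψ p ^ 2 * p.1 ^ 2 +
      3 * T⁻¹ * (p.1 ^ (-δ) * dt ψ p ^ 2) := by
  have hps := Om_subset_smoothSet (one_pos.trans_le hT) hTR hp
  have ht : p.1 ≠ 0 := hps.1.ne'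
  have hcross : 2 * gradInner (fdel δ) ψ p * dt ψ p ≤
      gradInner (fdel δ) ψ p ^ 2 * p.1 ^ 2 + p.1 ^ (-2 : ℝ) * dt ψ p ^ 2 := by
    calc 2 * gradInner (fdel δ) ψ p * dt ψ p
        = 2 * (gradInner (fdel δ) ψ p * p.1) * (p.1⁻¹ * dt ψ p) := by field_simp
      _ ≤ (gradInner (fdel δ) ψ p * p.1) ^ 2 + (p.1⁻¹ * dt ψ p) ^ 2 := two_mul_le_add_sq _ _
      _ = gradInner (fdel δ) ψ p ^ 2 * p.1 ^ 2 + p.1 ^ (-2 : ℝ) * dt ψ p ^ 2 := by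
        rw [rpow_neg hps.1.le, rpow_two]
        ring
  have hs := mul_le_mul_of_nonneg_right
    (rpow_le_inv_mul_rpow_neg (δ := δ) (c := -δ - 1) hT hp.1 le_rfl) (sq_nonneg (dt ψ p))
  have hinv := mul_le_mul_of_nonneg_right
    (rpow_le_inv_mul_rpow_neg (δ := δ) (c := -2) hT hp.1 (by linarith)) (sq_nonneg (dt ψ p))
  rw [angSq_eq ψ hps.2]
  linarith [dt_sq_sub_dr_sq_le hδ.ne' ψ hps]

lemma neg_box_mul_self_le (hT : 1 ≤ T) (hTR : -2 * R ≤ T) (hδ : 0 < δ) (τ : ℝ) (ψ : Spc → ℝ)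
    (hp : p ∈ Om T R) :
    -(box ψ p * ψ p) ≤ T⁻¹ ^ 2 / 2 * (P1 τ δ ψ p ^ 2 * p.1 ^ 2) + ψ p ^ 2 / 2 +
      2 * τ ^ 2 * T⁻¹ * (p.1 ^ (-δ) * ψ p ^ 2) := by
  have hT0 : 0 < T := one_pos.trans_le hT
  have hps := Om_subset_smoothSet hT0 hTR hp
  have hf : gradInner (fdel δ) (fdel δ) p ≤ 2 * (T⁻¹ * p.1 ^ (-δ)) := by
    rw [gradInner_fdel_self hδ.ne' hps]
    linarith [rpow_le_inv_mul_rpow_neg (δ := δ) hT hp.1 le_rfl, sq_nonneg (p.1 ^ (-δ - 1))]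
  have hf_mul : τ ^ 2 * gradInner (fdel δ) (fdel δ) p * ψ p ^ 2 ≤
      τ ^ 2 * (2 * (T⁻¹ * p.1 ^ (-δ))) * ψ p ^ 2 := by gcongr
  have hP1 : P1 τ δ ψ p = box ψ p + τ ^ 2 * gradInner (fdel δ) (fdel δ) p * ψ p := rfl
  have hP1_sq : P1 τ δ ψ p ^ 2 ≤ T⁻¹ ^ 2 * (P1 τ δ ψ p ^ 2 * p.1 ^ 2) := by
    have : 1 ≤ (T⁻¹ * p.1) ^ 2 := one_le_pow₀ ((one_le_inv_mul₀ hT0).mpr hp.1)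
    calc P1 τ δ ψ p ^ 2 ≤ P1 τ δ ψ p ^ 2 * (T⁻¹ * p.1) ^ 2 :=
          le_mul_of_one_le_right (sq_nonneg _) this
      _ = T⁻¹ ^ 2 * (P1 τ δ ψ p ^ 2 * p.1 ^ 2) := by ring
  have hbox : -(box ψ p * ψ p) =
      -(P1 τ δ ψ p * ψ p) + τ ^ 2 * gradInner (fdel δ) (fdel δ) p * ψ p ^ 2 := by
    rw [hP1]
    ring
  linarith [sq_nonneg (P1 τ δ ψ p + ψ p)]

lemma inv_rr_sq_mul_mul_fst_sq_le {A : ℝ} (hA : 0 ≤ A) (ht : 0 ≤ p.1) (hr : rr p ≠ 0)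
    (htr : p.1 ≤ 2 * rr p) : (rr p)⁻¹ ^ 2 * A * p.1 ^ 2 ≤ 4 * A := by
  calc (rr p)⁻¹ ^ 2 * A * p.1 ^ 2 ≤ (rr p)⁻¹ ^ 2 * A * (2 * rr p) ^ 2 := by gcongr
    _ = 4 * A := by field_simp; ring

lemma angular_integrand_le (hT : 1 ≤ T) (hTR : -2 * R ≤ T) (hδ : 0 < δ) (hδ1 : δ ≤ 1) (τ : ℝ)
    (ψ : Spc → ℝ) (hp : p ∈ Om T R) :
    (rr p)⁻¹ ^ 2 * angSq ψ p * p.1 ^ 2 ≤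
      4 * (gradInner ψ ψ p + box ψ p * ψ p) + 2 * T⁻¹ ^ 2 * (P1 τ δ ψ p ^ 2 * p.1 ^ 2) +
      2 * ((p.1⁻¹ * ψ p) ^ 2 * p.1 ^ 2) + 4 * (gradInner (fdel δ) ψ p ^ 2 * p.1 ^ 2) +
      8 * τ ^ 2 * T⁻¹ * ((p.1 ^ (-δ / 2 - 1) * ψ p) ^ 2 * p.1 ^ 2) +
      12 * T⁻¹ * ((p.1 ^ (-δ / 2 - 1) * dt ψ p) ^ 2 * p.1 ^ 2) := by
  have hps := Om_subset_smoothSet (one_pos.trans_le hT) hTR hp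
  have ht : p.1 ≠ 0 := hps.1.ne'
  have hψ : (p.1⁻¹ * ψ p) ^ 2 * p.1 ^ 2 = ψ p ^ 2 := by field_simp
  have hang : 0 ≤ angSq ψ p := Finset.sum_nonneg fun j _ => sq_nonneg _
  rw [hψ, rpow_mul_sq_mul_sq hps.1, rpow_mul_sq_mul_sq hps.1]
  linarith [inv_rr_sq_mul_mul_fst_sq_le hang hps.1.le hps.2 (fst_le_two_mul_rr hTR hp),
    angSq_le hT hTR hδ hδ1 ψ hp, neg_box_mul_self_le hT hTR hδ τ ψ hp]

end Angular

section Estimate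

variable {T R δ : ℝ} {ψ : Spc → ℝ}

lemma continuous_P1 (hψ : ContDiff ℝ 2 ψ) (hsmooth : tsupport ψ ⊆ smoothSet) (τ δ : ℝ) :
    Continuous (P1 τ δ ψ) := by
  have hpd : ∀ α, ∀ p ∈ tsupport ψ, ContinuousAt (pd α (fdel δ)) p := fun α p hp =>
    (contDiffAt_pd (m := 0) (contDiffAt_fdel (n := 1) δ (hsmooth hp)) le_rfl).continuousAt
  refine (continuous_box hψ).add (continuous_mul_of_continuousAt_tsupport (fun p hp => ?_)
    hψ.continuous)
  have := fun α => hpd α p hp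
  fun_prop

lemma hasCompactSupport_P1 (hψc : HasCompactSupport ψ) (τ δ : ℝ) :
    HasCompactSupport (P1 τ δ ψ) :=
  (hasCompactSupport_box hψc).add hψc.mul_left

lemma integrableOn_fst_rpow_mul_sq_mul_fst_sq {u : Spc → ℝ} (hu : Continuous u)
    (huc : HasCompactSupport u) (hpos : ∀ p ∈ tsupport u, 0 < p.1) (c : ℝ) :
    IntegrableOn (fun p => (p.1 ^ c * u p) ^ 2 * p.1 ^ 2) (Om T R) :=
  integrableOn_sq_mul_fst_sq
    (continuous_mul_of_continuousAt_tsupport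
      (fun p hp => (contDiffAt_fst_rpow (n := 0) c (hpos p hp)).continuousAt) hu)
    huc.mul_left

lemma nrm_P2_sq (T R τ δ : ℝ) (ψ : Spc → ℝ) :
    nrm T R (P2 τ δ ψ) ^ 2 = 4 * τ ^ 2 * nrm T R (gradInner (fdel δ) ψ) ^ 2 := by
  rw [show P2 τ δ ψ = fun p => -2 * τ * gradInner (fdel δ) ψ p from rfl, nrm_const_mul_sq]
  ring

lemma angNorm2_le_add_nrm_inv_fst_mul_sq (hT : 1 ≤ T) (hTR : -2 * R ≤ T) (hδ : 0 < δ)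
    (hδ1 : δ ≤ 1) (τ : ℝ) (hψ : ContDiff ℝ 2 ψ) (hψc : HasCompactSupport ψ)
    (hsupp : tsupport ψ ⊆ Om T R) :
    angNorm2 T R ψ ≤ 2 * T⁻¹ ^ 2 * nrm T R (P1 τ δ ψ) ^ 2 +
      2 * nrm T R (fun p => p.1⁻¹ * ψ p) ^ 2 + 4 * nrm T R (gradInner (fdel δ) ψ) ^ 2 +
      8 * τ ^ 2 * T⁻¹ * nrm T R (fun p => p.1 ^ (-δ / 2 - 1) * ψ p) ^ 2 +
      12 * T⁻¹ * nrm T R (fun p => p.1 ^ (-δ / 2 - 1) * dt ψ p) ^ 2 := by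
  have hsmooth := hsupp.trans (Om_subset_smoothSet (one_pos.trans_le hT) hTR)
  have hψ1 : ContDiff ℝ 1 ψ := hψ.of_le one_le_two
  have hgreen : IntegrableOn (fun p => gradInner ψ ψ p + box ψ p * ψ p) (Om T R) :=
    (integrable_gradInner_add_box_mul (fun _ _ => hψ.contDiffAt) hψ1 hψc).integrableOn
  have hP1 : IntegrableOn (fun p => P1 τ δ ψ p ^ 2 * p.1 ^ 2) (Om T R) :=
    integrableOn_sq_mul_fst_sq (continuous_P1 hψ hsmooth τ δ) (hasCompactSupport_P1 hψc τ δ)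
  have hQ : IntegrableOn (fun p => gradInner (fdel δ) ψ p ^ 2 * p.1 ^ 2) (Om T R) :=
    integrableOn_gradInner_sq_mul_fst_sq (fun p hp => contDiffAt_fdel δ (hsmooth hp)) hψ1 hψc
  have hinv : IntegrableOn (fun p => (p.1⁻¹ * ψ p) ^ 2 * p.1 ^ 2) (Om T R) := by
    simpa only [rpow_neg_one] using integrableOn_fst_rpow_mul_sq_mul_fst_sq hψ.continuous hψc
      (fun p hp => (hsmooth hp).1) (-1)
  have hψw := integrableOn_fst_rpow_mul_sq_mul_fst_sq (T := T) (R := R) hψ.continuous hψc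
    (fun p hp => (hsmooth hp).1) (-δ / 2 - 1)
  have hdtw := integrableOn_fst_rpow_mul_sq_mul_fst_sq (T := T) (R := R) (u := dt ψ)
    (contDiff_pd (m := 0) hψ1 le_rfl).continuous (hasCompactSupport_pd (α := 0) hψc)
    (fun p hp => (hsmooth (tsupport_pd_subset hp)).1) (-δ / 2 - 1)
  have hsum₂ := (hgreen.const_mul 4).fun_add (hP1.const_mul (2 * T⁻¹ ^ 2))
  have hsum₃ := hsum₂.fun_add (hinv.const_mul 2)
  have hsum₄ := hsum₃.fun_add (hQ.const_mul 4)
  have hsum₅ := hsum₄.fun_add (hψw.const_mul (8 * τ ^ 2 * T⁻¹))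
  calc angNorm2 T R ψ
      ≤ ∫ p in Om T R, (4 * (gradInner ψ ψ p + box ψ p * ψ p) +
          2 * T⁻¹ ^ 2 * (P1 τ δ ψ p ^ 2 * p.1 ^ 2) +
          2 * ((p.1⁻¹ * ψ p) ^ 2 * p.1 ^ 2) + 4 * (gradInner (fdel δ) ψ p ^ 2 * p.1 ^ 2) +
          8 * τ ^ 2 * T⁻¹ * ((p.1 ^ (-δ / 2 - 1) * ψ p) ^ 2 * p.1 ^ 2) +
          12 * T⁻¹ * ((p.1 ^ (-δ / 2 - 1) * dt ψ p) ^ 2 * p.1 ^ 2)) := by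
        exact integral_mono_of_nonneg (.of_forall fun p => by positivity)
          (hsum₅.add (hdtw.const_mul _)) (ae_restrict_of_forall_mem measurableSet_Om fun p hp =>
            angular_integrand_le hT hTR hδ hδ1 τ ψ hp)
    _ = _ := by
        rw [integral_add hsum₅ (hdtw.const_mul _), integral_add hsum₄ (hψw.const_mul _),
          integral_add hsum₃ (hQ.const_mul _), integral_add hsum₂ (hinv.const_mul _),
          integral_add (hgreen.const_mul _) (hP1.const_mul _)]
        simp only [integral_const_mul, nrm_sq, mul_zero, zero_add,
          setIntegral_gradInner_add_box_mul_eq_zero hsupp (fun _ _ => hψ.contDiffAt) hψ1 hψc]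

theorem stmt11_general {T₀ R'' τ δ : ℝ} (hT₀ : 1 ≤ T₀) (hT₀R : -2 * R'' ≤ T₀) (hτ : 1 ≤ τ)
    (hδ : 0 < δ) (hδ1 : δ ≤ 1) {ψ : Spc → ℝ} (hψ : ContDiff ℝ 2 ψ) (hψc : HasCompactSupport ψ)
    (hsupp : tsupport ψ ⊆ Om T₀ R'') :
    angNorm2 T₀ R'' ψ
      ≤ 12 * (T₀⁻¹ ^ 2 * nrm T₀ R'' (P1 τ δ ψ) ^ 2
          + τ⁻¹ * nrm T₀ R'' (P2 τ δ ψ) ^ 2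
          + τ ^ 2 * T₀⁻¹ * nrm T₀ R'' (fun p => p.1 ^ (-δ / 2 - 1) * ψ p) ^ 2
          + T₀⁻¹ * nrm T₀ R'' (fun p => p.1 ^ (-δ / 2 - 1) * dt ψ p) ^ 2) := by
  have hT₀pos : 0 < T₀ := one_pos.trans_le hT₀
  have hsmooth := Om_subset_smoothSet hT₀pos hT₀R
  have hardy := nrm_inv_fst_mul_sq_le hT₀pos
    (fun p hp => contDiffAt_fdel δ (hsmooth (hsupp hp)))
    (fun p hp => one_le_fst_mul_box_fdel_sub_dt_fdel hδ (hsmooth hp)) (hψ.of_le one_le_two) hψc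
    hsupp
  have hP2 : nrm T₀ R'' (gradInner (fdel δ) ψ) ^ 2 ≤ τ⁻¹ * nrm T₀ R'' (P2 τ δ ψ) ^ 2 := by
    have hcancel : τ⁻¹ * (4 * τ ^ 2) = 4 * τ := by
      rw [mul_left_comm, sq, inv_mul_cancel_left₀ (one_pos.trans_le hτ).ne']
    rw [nrm_P2_sq, ← mul_assoc, hcancel]
    exact le_mul_of_one_le_left (sq_nonneg _) (by linarith)
  have hP1 : 0 ≤ T₀⁻¹ ^ 2 * nrm T₀ R'' (P1 τ δ ψ) ^ 2 := by positivity
  have hψw : 0 ≤ τ ^ 2 * T₀⁻¹ * nrm T₀ R'' (fun p => p.1 ^ (-δ / 2 - 1) * ψ p) ^ 2 := by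
    positivity
  linarith [angNorm2_le_add_nrm_inv_fst_mul_sq hT₀ hT₀R hδ hδ1 τ hψ hψc hsupp]

end Estimate

/-- Lemma 3.9 of the paper: estimate for the angular derivatives. -/
theorem stmt11 (R R'' : ℝ) (hRR : R'' < R) :
    ∃ T₀star τ₀ C : ℝ, 1 ≤ τ₀ ∧ 0 < C ∧
      ∀ T₀, T₀star ≤ T₀ → ∀ τ, τ₀ ≤ τ → ∀ δ, 0 < δ → δ < 1 / 2 →
        ∀ ψ : Spc → ℝ, ContDiff ℝ 2 ψ → HasCompactSupport ψ →
          tsupport ψ ⊆ OmO T₀ R'' ∩ {p : Spc | rr p - p.1 < R} →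
          angNorm2 T₀ R'' ψ
            ≤ C * (T₀⁻¹ ^ 2 * nrm T₀ R'' (P1 τ δ ψ) ^ 2
                + τ⁻¹ * nrm T₀ R'' (P2 τ δ ψ) ^ 2
                + τ ^ 2 * T₀⁻¹ * nrm T₀ R'' (fun p => p.1 ^ (-δ / 2 - 1) * ψ p) ^ 2
                + T₀⁻¹ * nrm T₀ R'' (fun p => p.1 ^ (-δ / 2 - 1) * dt ψ p) ^ 2) := by
  refine ⟨max 1 (-2 * R''), 1, 12, le_rfl, by norm_num, ?_⟩
  intro T₀ hT₀ τ hτ δ hδ hδ2 ψ hψ hψc hsupp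
  exact stmt11_general (le_of_max_le_left hT₀) (le_of_max_le_right hT₀) hτ hδ (by linarith) hψ hψc
    ((hsupp.trans inter_subset_left).trans OmO_subset_Om)

end UCP
end
end
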